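/- arXiv:2203.04418 — 2 statements merged into one kernel-verified Lean document; each statement's English description precedes it below -/
import Mathlib

section
/- Let X be a finite set and μ a positive measure on 2^X. Then the μ-top-difference semimetric D^μ satisfies Axiom 1: for all acyclic orders ≿, ≿_0, ⊵ on X such that ≿_0 is in-between ≿ and ⊵, D^μ(≿,⊵) = D^μ(≿,≿_0) + D^μ(≿_0,⊵). -/
open Classical Finset symmDiff

section PrefDefs

variable {X : Type*}

/-- The asymmetric part `R^>` of a binary relation `R`. -/
def asymPart (R : X → X → Prop) : X → X → Prop := fun x y => R x y ∧ ¬ R y x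

/-- `R` is acyclic: there is no cycle of pairwise distinct elements
`z_0 R^> z_1 R^> ⋯ R^> z_k R^> z_0`. -/
def AcyclicRel (R : X → X → Prop) : Prop :=
  ¬ ∃ (k : ℕ) (z : Fin (k + 1) → X), Function.Injective z ∧
      ∀ i : Fin (k + 1), asymPart R (z i) (z (i + 1))

/-- An acyclic order: a reflexive acyclic binary relation. -/
def AcyclicOrd (R : X → X → Prop) : Prop := Reflexive R ∧ AcyclicRel R

/-- `M(S,R)`: the set of `R`-maximal elements of `S`. -/
noncomputable def MaxSet [DecidableEq X] (S : Finset X) (R : X → X → Prop) : Finset X :=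
  S.filter fun x => ∀ y ∈ S, ¬ asymPart R y x

/-- The μ-top-difference semimetric, where the measure μ is given by the
weights `w x = μ {x}`. -/
noncomputable def Dmu [Fintype X] [DecidableEq X] (w : X → ℝ) (R R' : X → X → Prop) : ℝ :=
  ∑ S : Finset X, ∑ x ∈ symmDiff (MaxSet S R) (MaxSet S R'), w x

/-- The top-difference semimetric `D`. -/
noncomputable def Dtop [Fintype X] [DecidableEq X] (R R' : X → X → Prop) : ℕ :=
  ∑ S : Finset X, (symmDiff (MaxSet S R) (MaxSet S R')).card

/-- `≿ ⊕ (a,b)`: if `b ∼ a` delete `(b,a)`, if `a, b` are `≿`-incomparable add `(a,b)`. -/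
def oplusR (R : X → X → Prop) (a b : X) : X → X → Prop :=
  fun x y => (R x y ∧ ¬(R b a ∧ x = b ∧ y = a)) ∨ (¬ R b a ∧ x = a ∧ y = b)

/-- `≿ ⊖ (a,b)`: delete the pair `(a,b)`. -/
def ominusR (R : X → X → Prop) (a b : X) : X → X → Prop :=
  fun x y => R x y ∧ ¬(x = a ∧ y = b)

/-- `≿ → ≿_0 ↠ ⊵` : `R0` is a one-step perturbation of `R` toward `R'`. -/
def OneStep (R R0 R' : X → X → Prop) : Prop :=
  AcyclicOrd R0 ∧
  ((∃ a b, asymPart R a b ∧ ¬ asymPart R' a b ∧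
      (∀ x, asymPart R' x b → asymPart R x b) ∧ R0 = ominusR R a b) ∨
   (∃ a b, ¬ asymPart R a b ∧ ¬ asymPart R b a ∧ asymPart R' a b ∧ R0 = oplusR R a b))

/-- `Q` is in-between `R` and `R'` : `Q` is an n-step perturbation of `R` toward `R'`
for some positive integer n. -/
def InBetween (R R' Q : X → X → Prop) : Prop :=
  ∃ (n : ℕ) (c : Fin (n + 1) → (X → X → Prop)),
    OneStep R (c 0) R' ∧
    (∀ i : Fin n, OneStep (c i.castSucc) (c i.succ) R') ∧
    c (Fin.last n) = Q

/-- `N(b,≿)`: the number of `x ≠ b` with not `x ≻ b`. -/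
noncomputable def Nnum [Fintype X] (R : X → X → Prop) (b : X) : ℕ :=
  (Finset.univ.filter fun x => x ≠ b ∧ ¬ asymPart R x b).card

/-- `≿_{ab}`: the partial order whose asymmetric part is `(X \ {a,b}) × {a,b}`. -/
def RabRel (a b : X) : X → X → Prop :=
  fun x y => x = y ∨ ((x ≠ a ∧ x ≠ b) ∧ (y = a ∨ y = b))

/-- `≿_{ab}^+`: as `≿_{ab}` but with `a` ranked strictly above `b`. -/
def RabPlusRel (a b : X) : X → X → Prop :=
  fun x y => RabRel a b x y ∨ (x = a ∧ y = b)

/-- `d` is a semimetric on the set of acyclic orders on `X`. -/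
def IsSemimetricOn (d : (X → X → Prop) → (X → X → Prop) → ℝ) : Prop :=
  (∀ R R', AcyclicOrd R → AcyclicOrd R' → 0 ≤ d R R') ∧
  (∀ R, AcyclicOrd R → d R R = 0) ∧
  (∀ R R', AcyclicOrd R → AcyclicOrd R' → d R R' = d R' R) ∧
  (∀ R R' R'', AcyclicOrd R → AcyclicOrd R' → AcyclicOrd R'' →
    d R R'' ≤ d R R' + d R' R'')

/-- Axiom 1. -/
def Axiom1 (d : (X → X → Prop) → (X → X → Prop) → ℝ) : Prop :=
  ∀ R R0 R' : X → X → Prop, AcyclicOrd R → AcyclicOrd R' →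
    InBetween R R' R0 → d R R' = d R R0 + d R0 R'

/-- Axiom 2. -/
def Axiom2 (d : (X → X → Prop) → (X → X → Prop) → ℝ) : Prop :=
  ∀ a b : X, a ≠ b → d (RabRel a b) (RabPlusRel a b) = 1

/-- Axiom 3. -/
def Axiom3 [Fintype X] (d : (X → X → Prop) → (X → X → Prop) → ℝ) : Prop :=
  (∀ (R : X → X → Prop) (a b : X), AcyclicOrd R → a ≠ b →
      ¬ asymPart R a b → ¬ asymPart R b a → AcyclicOrd (oplusR R a b) →
      d R (oplusR R a b) = (2 : ℝ) ^ (Nnum R b - 1) * d (RabRel a b) (RabPlusRel a b)) ∧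
  (∀ (R : X → X → Prop) (a b : X), AcyclicOrd R → asymPart R a b →
      d R (ominusR R a b) = (2 : ℝ) ^ (Nnum R b) * d (RabRel a b) (RabPlusRel a b))

/-- Axiom 4. -/
def Axiom4 (d : (X → X → Prop) → (X → X → Prop) → ℝ) : Prop :=
  ∀ R R' : X → X → Prop, AcyclicOrd R → AcyclicOrd R' →
    (∀ x y, asymPart R x y ↔ asymPart R' x y) → d R R' = 0

end PrefDefs

/-- Invariant preserved along perturbation chains. -/
def ChainInv {X : Type*} (R R' Q : X → X → Prop) : Prop :=
  ∀ b, ((∀ y, asymPart R y b → asymPart Q y b) ∨ (∀ y, asymPart R' y b → asymPart Q y b)) ∧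
    ∀ y, asymPart Q y b → asymPart R y b ∨ asymPart R' y b

theorem asym_ominus {X : Type*} (R : X → X → Prop) (a b : X) (h : asymPart R a b) (x y : X) :
    asymPart (ominusR R a b) x y ↔ asymPart R x y ∧ ¬ (x = a ∧ y = b) := by
  unfold asymPart ominusR at *
  grind

theorem asym_oplus {X : Type*} (R : X → X → Prop) (a b : X) (h : ¬ asymPart R a b)
    (h' : ¬ asymPart R b a) (hab : a ≠ b) (x y : X) :
    asymPart (oplusR R a b) x y ↔ asymPart R x y ∨ (x = a ∧ y = b) := by
  unfold asymPart oplusR at *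
  grind

theorem chainInv_step {X : Type*} (R R' Q Q' : X → X → Prop) (h : ChainInv R R' Q)
    (hs : OneStep Q Q' R') : ChainInv R R' Q' := by
  obtain ⟨-, ⟨a, b, h1, h2, h3, rfl⟩ | ⟨a, b, h1, h2, h3, rfl⟩⟩ := hs
  · intro c
    have hc := h c
    simp only [asym_ominus Q a b h1]
    refine ⟨?_, fun y hy => hc.2 y hy.1⟩
    by_cases hcb : c = b
    · subst hcb
      right
      intro y hy
      refine ⟨h3 y hy, ?_⟩
      rintro ⟨rfl, -⟩
      exact h2 hy
    · simpa [hcb] using hc.1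
  · have hab : a ≠ b := by
      rintro rfl
      exact h3.2 h3.1
    intro c
    have hc := h c
    simp only [asym_oplus Q a b h1 h2 hab]
    refine ⟨hc.1.imp (fun k y hy => Or.inl (k y hy)) (fun k y hy => Or.inl (k y hy)), ?_⟩
    rintro y (hy | ⟨rfl, rfl⟩)
    · exact hc.2 y hy
    · exact Or.inr h3

theorem chainInv_inBetween {X : Type*} (R R' Q : X → X → Prop) (h : InBetween R R' Q) :
    ChainInv R R' Q := by
  obtain ⟨n, c, h0, hs, rfl⟩ := h
  have key : ∀ i : Fin (n + 1), ChainInv R R' (c i) := by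
    intro i
    induction i using Fin.induction with
    | zero => exact chainInv_step R R' R _ (fun b => ⟨Or.inl fun _ h => h, fun _ h => Or.inl h⟩) h0
    | succ i ih => exact chainInv_step R R' _ _ ih (hs i)
  exact key _

/-- The μ-top-difference semimetric satisfies Axiom 1. -/
theorem stmt_3 {X : Type*} [Fintype X] [DecidableEq X]
    (w : X → ℝ) (hw : ∀ x, 0 ≤ w x)
    (R R0 R' : X → X → Prop) (hR : AcyclicOrd R) (hR' : AcyclicOrd R')
    (h : InBetween R R' R0) :
    Dmu w R R' = Dmu w R R0 + Dmu w R0 R' := by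
  have inv := chainInv_inBetween R R' R0 h
  unfold Dmu
  rw [← Finset.sum_add_distrib]
  refine Finset.sum_congr rfl fun S _ => ?_
  have h1 : ∀ x, x ∈ MaxSet S R → x ∈ MaxSet S R' → x ∈ MaxSet S R0 := by
    intro x
    simp only [MaxSet, Finset.mem_filter]
    rintro ⟨hx, k⟩ ⟨-, k'⟩
    exact ⟨hx, fun y hy hq => ((inv x).2 y hq).elim (k y hy) (k' y hy)⟩
  have h2 : ∀ x, x ∈ MaxSet S R0 → x ∈ MaxSet S R ∨ x ∈ MaxSet S R' := by
    intro x
    simp only [MaxSet, Finset.mem_filter]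
    rintro ⟨hx, k⟩
    exact (inv x).1.imp (fun q => ⟨hx, fun y hy hq => k y hy (q y hq)⟩)
      (fun q => ⟨hx, fun y hy hq => k y hy (q y hq)⟩)
  rw [← Finset.sum_union]
  · congr 1
    ext x
    have p1 := h1 x
    have p2 := h2 x
    clear h1 h2 inv h hR hR' hw
    revert p1 p2
    simp only [Finset.mem_union, Finset.mem_symmDiff]
    generalize (x ∈ MaxSet S R) = p, (x ∈ MaxSet S R0) = q, (x ∈ MaxSet S R') = r
    grind
  · rw [Finset.disjoint_left]
    intro x
    have p1 := h1 x
    have p2 := h2 x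
    clear h1 h2 inv h hR hR' hw
    revert p1 p2
    simp only [Finset.mem_symmDiff]
    generalize (x ∈ MaxSet S R) = p, (x ∈ MaxSet S R0) = q, (x ∈ MaxSet S R') = r
    grind
end

section
/- Let X be a nonempty finite set. A semimetric d : A(X) × A(X) → [0,∞) satisfies Axioms 1, 2, 3 and 4 if, and only if, d is the top-difference semimetric D, i.e., d(≿,⊵) = Σ_{S ⊆ X} |M(S,≿) △ M(S,⊵)| for all acyclic orders ≿, ⊵ on X. -/
open Classical Finset symmDiff

section Helpers

variable {X : Type*}

theorem acyclicRel_of_transGen {R : X → X → Prop}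
    (h : ∀ x, ¬ Relation.TransGen (asymPart R) x x) : AcyclicRel R := by
  rintro ⟨k, z, -, hz⟩
  have hsucc : ∀ n : ℕ, Fin.ofNat (k + 1) (n + 1) = Fin.ofNat (k + 1) n + 1 := by
    intro n
    ext
    simp [Fin.val_add]
  have key : ∀ n : ℕ, Relation.TransGen (asymPart R) (z 0) (z (Fin.ofNat (k + 1) (n + 1))) := by
    intro n
    induction n with
    | zero =>
      refine Relation.TransGen.single ?_
      rw [hsucc]
      exact hz 0
    | succ n ih =>
      refine ih.tail ?_
      rw [hsucc (n + 1)]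
      exact hz _
  have h1 := key k
  have h2 : Fin.ofNat (k + 1) (k + 1) = 0 := by
    ext
    simp
  rw [h2] at h1
  exact h _ h1

theorem walk_of_transGen {r : X → X → Prop} {a b : X} (h : Relation.TransGen r a b) :
    ∃ (n : ℕ) (f : ℕ → X), f 0 = a ∧ f (n + 1) = b ∧ ∀ i, i < n + 1 → r (f i) (f (i + 1)) := by
  induction h with
  | single h =>
    rename_i c
    refine ⟨0, fun i => if i = 0 then a else c, by simp, by simp, ?_⟩
    intro i hi
    have : i = 0 := by omega
    subst this
    simpa using h
  | @tail b c _ hbc ih =>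
    obtain ⟨n, f, h0, h1, h2⟩ := ih
    refine ⟨n + 1, fun i => if i ≤ n + 1 then f i else c, by simpa using h0, by simp, ?_⟩
    intro i hi
    by_cases h : i = n + 1
    · subst h
      simpa [h1] using hbc
    · have h3 : i ≤ n + 1 := by omega
      have h4 : i + 1 ≤ n + 1 := by omega
      have := h2 i (by omega)
      simpa only [h3, h4, if_true] using this

theorem transGen_irrefl {R : X → X → Prop} (h : AcyclicRel R) (x : X) :
    ¬ Relation.TransGen (asymPart R) x x := by
  intro hx
  have hex : ∃ n : ℕ, ∃ f : ℕ → X, f (n + 1) = f 0 ∧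
      ∀ i, i < n + 1 → asymPart R (f i) (f (i + 1)) := by
    obtain ⟨n, f, h0, h1, h2⟩ := walk_of_transGen hx
    exact ⟨n, f, by rw [h0, h1], h2⟩
  obtain ⟨f, hf, hs⟩ := Nat.find_spec hex
  have hmin := fun m (hm : m < Nat.find hex) => Nat.find_min hex hm
  generalize Nat.find hex = n at f hf hs hmin
  have hinj : ∀ i j : ℕ, i < j → j < n + 1 → f i ≠ f j := by
    intro i j hij hj he
    refine hmin (j - i - 1) (by omega) ⟨fun t => f (i + t), ?_, ?_⟩
    · have : i + (j - i - 1 + 1) = j := by omega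
      simp only [this, add_zero, he]
    · intro t ht
      exact hs (i + t) (by omega)
  refine h ⟨n, fun i => f i.val, ?_, ?_⟩
  · intro i j hij
    rcases lt_trichotomy i.val j.val with hl | hl | hl
    · exact absurd hij (hinj _ _ hl j.isLt)
    · exact Fin.ext hl
    · exact absurd hij.symm (hinj _ _ hl i.isLt)
  · intro i
    have h1 := hs i.val i.isLt
    by_cases hi : i.val = n
    · have hi2 : i = Fin.last n := Fin.ext hi
      subst hi2
      simp only [Fin.last_add_one]
      rw [show ((Fin.last n).val) = n from rfl, hf] at h1
      exact h1
    · have : (i + 1).val = i.val + 1 := by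
        apply Fin.val_add_one_of_lt
        rw [Fin.lt_def]
        have := i.isLt
        simp only [Fin.val_last]
        omega
      simp only [this]
      exact h1

theorem asymPart_ne {R : X → X → Prop} {a b : X} (h : asymPart R a b) : a ≠ b := by
  rintro rfl
  exact h.2 h.1

theorem asymPart_oplus {R : X → X → Prop} {a b : X} (hab : a ≠ b)
    (h1 : ¬ asymPart R a b) (h2 : ¬ asymPart R b a) (x y : X) :
    asymPart (oplusR R a b) x y ↔ asymPart R x y ∨ (x = a ∧ y = b) := by
  unfold asymPart oplusR at *
  grind

theorem asymPart_ominus {R : X → X → Prop} {a b : X}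
    (h1 : asymPart R a b) (x y : X) :
    asymPart (ominusR R a b) x y ↔ asymPart R x y ∧ ¬ (x = a ∧ y = b) := by
  unfold asymPart ominusR at *
  grind

theorem ominus_acyclic {R : X → X → Prop} {a b : X} (hR : AcyclicOrd R)
    (h1 : asymPart R a b) : AcyclicOrd (ominusR R a b) := by
  refine ⟨fun x => ⟨hR.1 x, ?_⟩, acyclicRel_of_transGen fun x hx => ?_⟩
  · rintro ⟨rfl, rfl⟩
    exact h1.2 h1.1
  · exact transGen_irrefl hR.2 x
      (Relation.TransGen.mono (fun u v huv => ((asymPart_ominus h1 u v).1 huv).1) _ _ hx)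

theorem oplus_acyclic {R : X → X → Prop} {a b : X} (hR : AcyclicOrd R) (hab : a ≠ b)
    (h1 : ¬ asymPart R a b) (h2 : ¬ asymPart R b a)
    (h3 : ¬ Relation.ReflTransGen (asymPart R) b a) : AcyclicOrd (oplusR R a b) := by
  refine ⟨fun x => Or.inl ⟨hR.1 x, ?_⟩, acyclicRel_of_transGen fun x hx => ?_⟩
  · rintro ⟨_, rfl, h⟩
    exact hab h.symm
  · have key : ∀ y, Relation.TransGen (asymPart (oplusR R a b)) x y →
        Relation.TransGen (asymPart R) x y ∨
        (Relation.ReflTransGen (asymPart R) x a ∧ Relation.ReflTransGen (asymPart R) b y) := by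
      intro y hy
      induction hy with
      | single h =>
        rcases (asymPart_oplus hab h1 h2 _ _).1 h with h | ⟨rfl, rfl⟩
        · exact Or.inl (Relation.TransGen.single h)
        · exact Or.inr ⟨.refl, .refl⟩
      | tail _ h ih =>
        rcases (asymPart_oplus hab h1 h2 _ _).1 h with h | ⟨rfl, rfl⟩
        · rcases ih with ih | ⟨i1, i2⟩
          · exact Or.inl (ih.tail h)
          · exact Or.inr ⟨i1, i2.tail h⟩
        · rcases ih with ih | ⟨i1, i2⟩
          · exact Or.inr ⟨ih.to_reflTransGen, .refl⟩
          · exact Or.inr ⟨i1, .refl⟩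
    rcases key x hx with h | ⟨i1, i2⟩
    · exact transGen_irrefl hR.2 x h
    · exact h3 (i2.trans i1)

/-- pointwise betweenness of choice sets -/
def ChoiceBtw [DecidableEq X] (R Q R' : X → X → Prop) : Prop :=
  ∀ S : Finset X, ∀ x, (x ∈ MaxSet S R → x ∈ MaxSet S R' → x ∈ MaxSet S Q) ∧
    (x ∈ MaxSet S Q → x ∈ MaxSet S R ∨ x ∈ MaxSet S R')

theorem btw_trans [DecidableEq X] {R Q Q' R' : X → X → Prop} (h1 : ChoiceBtw R Q R')
    (h2 : ChoiceBtw Q Q' R') : ChoiceBtw R Q' R' := by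
  intro S x
  have := h1 S x
  have := h2 S x
  tauto

theorem btw_oneStep [DecidableEq X] {R Q R' : X → X → Prop} (h : OneStep R Q R') : ChoiceBtw R Q R' := by
  intro S x
  simp only [MaxSet, Finset.mem_filter]
  rcases h with ⟨-, ⟨a, b, h1, h2, h3, rfl⟩ | ⟨a, b, h1, h2, h3, rfl⟩⟩
  · simp only [asymPart_ominus h1]
    grind
  · simp only [asymPart_oplus (asymPart_ne h3) h1 h2]
    grind

theorem btw_inBetween [DecidableEq X] {R Q R' : X → X → Prop} (h : InBetween R R' Q) :
    ChoiceBtw R Q R' := by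
  obtain ⟨n, c, h0, hs, rfl⟩ := h
  have : ∀ i : Fin (n + 1), ChoiceBtw R (c i) R' := by
    intro i
    induction i using Fin.induction with
    | zero => exact btw_oneStep h0
    | succ i ih => exact btw_trans ih (btw_oneStep (hs i))
  exact this _

theorem inBetween_of_oneStep {R Q R' : X → X → Prop} (h : OneStep R Q R') : InBetween R R' Q :=
  ⟨0, fun _ => Q, h, fun i => i.elim0, rfl⟩

theorem Dtop_btw [Fintype X] [DecidableEq X] {R Q R' : X → X → Prop} (h : ChoiceBtw R Q R') :
    Dtop R R' = Dtop R Q + Dtop Q R' := by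
  unfold Dtop
  rw [← Finset.sum_add_distrib]
  refine Finset.sum_congr rfl fun S _ => ?_
  rw [← Finset.card_union_of_disjoint]
  · congr 1
    ext x
    obtain ⟨h1, h2⟩ := h S x
    simp only [Finset.mem_symmDiff, Finset.mem_union]
    by_cases p : x ∈ MaxSet S R <;> by_cases q : x ∈ MaxSet S Q <;>
      by_cases r : x ∈ MaxSet S R' <;> simp_all
  · rw [Finset.disjoint_left]
    intro x
    obtain ⟨h1, h2⟩ := h S x
    simp only [Finset.mem_symmDiff]
    by_cases p : x ∈ MaxSet S R <;> by_cases q : x ∈ MaxSet S Q <;>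
      by_cases r : x ∈ MaxSet S R' <;> simp_all

theorem Dtop_comm [Fintype X] [DecidableEq X] (R Q : X → X → Prop) : Dtop R Q = Dtop Q R := by
  unfold Dtop
  simp only [symmDiff_comm]

theorem MaxSet_congr [DecidableEq X] {R Q : X → X → Prop}
    (h : ∀ x y, asymPart R x y ↔ asymPart Q x y) (S : Finset X) : MaxSet S R = MaxSet S Q := by
  simp only [MaxSet, h]

theorem Dtop_zero [Fintype X] [DecidableEq X] {R Q : X → X → Prop}
    (h : ∀ x y, asymPart R x y ↔ asymPart Q x y) : Dtop R Q = 0 := by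
  simp [Dtop, MaxSet_congr h]

theorem Dtop_step [Fintype X] [DecidableEq X] {R Q : X → X → Prop} {a b : X} (hab : a ≠ b)
    (h1 : ¬ asymPart R a b)
    (hQ : ∀ x y, asymPart Q x y ↔ asymPart R x y ∨ (x = a ∧ y = b)) :
    Dtop R Q = 2 ^ (Nnum R b - 1) := by
  set T : Finset X := insert b (Finset.univ.filter fun x => x ≠ b ∧ ¬ asymPart R x b) with hT
  have hbb : ¬ asymPart R b b := fun h => h.2 h.1
  have hsub : ({a, b} : Finset X) ⊆ T := by
    intro x
    simp only [hT, Finset.mem_insert, Finset.mem_singleton, Finset.mem_filter, Finset.mem_univ]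
    grind
  have hcT : T.card = Nnum R b + 1 := by
    rw [hT, Finset.card_insert_of_notMem (by simp)]
    unfold Nnum
    congr!
  have hS : ∀ S : Finset X, (symmDiff (MaxSet S R) (MaxSet S Q)).card
      = if S ∈ Finset.Icc ({a, b} : Finset X) T then 1 else 0 := by
    intro S
    have hmem : S ∈ Finset.Icc ({a, b} : Finset X) T ↔
        a ∈ S ∧ b ∈ S ∧ ∀ y ∈ S, ¬ asymPart R y b := by
      simp only [Finset.mem_Icc, Finset.subset_iff, hT, Finset.mem_insert,
        Finset.mem_singleton, Finset.mem_filter, Finset.mem_univ]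
      grind
    split_ifs with h
    · rw [hmem] at h
      rw [Finset.card_eq_one]
      refine ⟨b, ?_⟩
      ext x
      simp only [Finset.mem_symmDiff, MaxSet, Finset.mem_filter, hQ, Finset.mem_singleton]
      grind
    · rw [hmem] at h
      rw [Finset.card_eq_zero]
      ext x
      simp only [Finset.mem_symmDiff, MaxSet, Finset.mem_filter, hQ, Finset.notMem_empty]
      grind
  unfold Dtop
  simp only [hS]
  rw [Finset.sum_ite_mem, Finset.univ_inter, Finset.sum_const, smul_eq_mul, mul_one,
    Finset.card_Icc_finset hsub, hcT, Finset.card_pair hab]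
  congr 1

theorem Nnum_ominus [Fintype X] {R : X → X → Prop} {a b : X} (h : asymPart R a b) :
    Nnum (ominusR R a b) b = Nnum R b + 1 := by
  unfold Nnum
  rw [← Finset.card_insert_of_notMem (a := a)]
  · congr 1
    ext x
    have := asymPart_ne h
    simp only [asymPart_ominus h, Finset.mem_filter, Finset.mem_univ, Finset.mem_insert]
    grind
  · simp [h]

theorem Dtop_ominus [Fintype X] [DecidableEq X] {R : X → X → Prop} {a b : X}
    (h : asymPart R a b) : Dtop R (ominusR R a b) = 2 ^ (Nnum R b) := by
  rw [Dtop_comm, Dtop_step (asymPart_ne h), Nnum_ominus h]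
  · rfl
  · simp [asymPart_ominus h]
  · intro x y
    simp only [asymPart_ominus h]
    grind

theorem Dtop_oplus [Fintype X] [DecidableEq X] {R : X → X → Prop} {a b : X} (hab : a ≠ b)
    (h1 : ¬ asymPart R a b) (h2 : ¬ asymPart R b a) :
    Dtop R (oplusR R a b) = 2 ^ (Nnum R b - 1) :=
  Dtop_step hab h1 (asymPart_oplus hab h1 h2)

theorem asymPart_Rab {a b : X} (x y : X) :
    asymPart (RabRel a b) x y ↔ ((x ≠ a ∧ x ≠ b) ∧ (y = a ∨ y = b)) := by
  unfold asymPart RabRel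
  grind

theorem asymPart_RabPlus {a b : X} (hab : a ≠ b) (x y : X) :
    asymPart (RabPlusRel a b) x y ↔ asymPart (RabRel a b) x y ∨ (x = a ∧ y = b) := by
  unfold asymPart RabPlusRel RabRel
  grind

theorem acyclicOrd_of_rank {R : X → X → Prop} (hr : ∀ x, R x x) (f : X → ℕ)
    (hf : ∀ x y, asymPart R x y → f x < f y) : AcyclicOrd R := by
  refine ⟨hr, acyclicRel_of_transGen fun x hx => ?_⟩
  have : ∀ y, Relation.TransGen (asymPart R) x y → f x < f y := by
    intro y hy
    induction hy with
    | single h => exact hf _ _ h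
    | tail _ h ih => exact ih.trans (hf _ _ h)
  exact lt_irrefl _ (this x hx)

theorem Rab_acyclic {a b : X} : AcyclicOrd (RabRel a b) := by
  refine acyclicOrd_of_rank (fun x => Or.inl rfl) (fun x => if x = a ∨ x = b then 1 else 0) ?_
  intro x y
  rw [asymPart_Rab]
  grind

theorem RabPlus_acyclic {a b : X} (hab : a ≠ b) : AcyclicOrd (RabPlusRel a b) := by
  refine acyclicOrd_of_rank (fun x => Or.inl (Or.inl rfl))
    (fun x => if x = a then 1 else if x = b then 2 else 0) ?_
  intro x y
  rw [asymPart_RabPlus hab, asymPart_Rab]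
  grind

theorem Nnum_Rab [Fintype X] {a b : X} (hab : a ≠ b) : Nnum (RabRel a b) b = 1 := by
  unfold Nnum
  rw [Finset.card_eq_one]
  refine ⟨a, ?_⟩
  ext x
  simp only [asymPart_Rab, Finset.mem_filter, Finset.mem_univ, Finset.mem_singleton]
  grind

/-- the number of disagreements between the asymmetric parts -/
noncomputable def diffNum [Fintype X] (R R' : X → X → Prop) : ℕ :=
  (Finset.univ.filter fun p : X × X => ¬ (asymPart R p.1 p.2 ↔ asymPart R' p.1 p.2)).card

theorem diffNum_oneStep [Fintype X] {R Q R' : X → X → Prop} (h : OneStep R Q R') :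
    diffNum Q R' < diffNum R R' := by
  unfold diffNum
  apply Finset.card_lt_card
  rw [Finset.ssubset_iff_subset_ne, ]
  rcases h with ⟨-, ⟨a, b, h1, h2, h3, rfl⟩ | ⟨a, b, h1, h2, h3, rfl⟩⟩
  · constructor
    · rintro ⟨x, y⟩
      simp only [asymPart_ominus h1, Finset.mem_filter, Finset.mem_univ]
      grind
    · intro he
      have := congrArg (fun s => (a, b) ∈ s) he
      simp [asymPart_ominus h1, h1, h2] at this
  · constructor
    · rintro ⟨x, y⟩
      simp only [asymPart_oplus (asymPart_ne h3) h1 h2, Finset.mem_filter, Finset.mem_univ]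
      grind
    · intro he
      have := congrArg (fun s => (a, b) ∈ s) he
      simp [asymPart_oplus (asymPart_ne h3) h1 h2, h1, h3] at this

theorem exists_oneStep [Finite X] {R R' : X → X → Prop} (hR : AcyclicOrd R) (hR' : AcyclicOrd R')
    (hne : ¬ ∀ x y, asymPart R x y ↔ asymPart R' x y) : ∃ Q, OneStep R Q R' := by
  by_cases hdel : ∃ a b, asymPart R a b ∧ ¬ asymPart R' a b ∧
      (∀ x, asymPart R' x b → asymPart R x b)
  · obtain ⟨a, b, h1, h2, h3⟩ := hdel
    exact ⟨_, ominus_acyclic hR h1, Or.inl ⟨a, b, h1, h2, h3, rfl⟩⟩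
  · set B : Set X := {b | ∃ a, asymPart R' a b ∧ ¬ asymPart R a b} with hB
    have hnB : ∀ b, b ∉ B → ∀ x, asymPart R x b → asymPart R' x b := by
      intro b hb x hx
      by_contra hx'
      refine hdel ⟨x, b, hx, hx', fun y hy => ?_⟩
      by_contra hy'
      exact hb ⟨y, hy, hy'⟩
    have hBne : B.Nonempty := by
      by_contra hempty
      rw [Set.not_nonempty_iff_eq_empty] at hempty
      refine hne fun x y => ⟨hnB y (by simp [hempty]) x, fun h => ?_⟩
      by_contra h'
      have : y ∈ B := ⟨x, h, h'⟩
      simp [hempty] at this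
    have hirr := transGen_irrefl hR'.2
    have : Std.Irrefl (Relation.TransGen (asymPart R')) := ⟨hirr⟩
    have wf : WellFounded (Relation.TransGen (asymPart R')) :=
      Finite.wellFounded_of_trans_of_irrefl _
    obtain ⟨b, hbB, hmin⟩ := wf.has_min B hBne
    obtain ⟨a, hab', hab⟩ := id hbB
    have key : ∀ z, Relation.ReflTransGen (asymPart R) b z →
        ¬ Relation.TransGen (asymPart R') z b := by
      intro z hz
      induction hz with
      | refl => exact hirr b
      | @tail y z _ h ih =>
        intro hzb
        have hz : z ∉ B := fun hz => hmin z hz hzb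
        exact ih (Relation.TransGen.head (hnB z hz y h) hzb)
    have hnp : ¬ Relation.ReflTransGen (asymPart R) b a := fun h =>
      key a h (Relation.TransGen.single hab')
    have hba : ¬ asymPart R b a := fun h => hnp (Relation.ReflTransGen.single h)
    exact ⟨_, oplus_acyclic hR (asymPart_ne hab') hab hba hnp,
      Or.inr ⟨a, b, hab, hba, hab', rfl⟩⟩

end Helpers

/-- Theorem 3.2: a semimetric on the acyclic orders on a nonempty finite
set satisfies Axioms 1-4 iff it is the top-difference semimetric `D`. -/
theorem stmt_7 {X : Type*} [Fintype X] [DecidableEq X] [Nonempty X]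
    (d : (X → X → Prop) → (X → X → Prop) → ℝ) (hd : IsSemimetricOn d) :
    (Axiom1 d ∧ Axiom2 d ∧ Axiom3 d ∧ Axiom4 d) ↔
      ∀ R R' : X → X → Prop, AcyclicOrd R → AcyclicOrd R' →
        d R R' = (Dtop R R' : ℝ) := by
  constructor
  · rintro ⟨A1, A2, A3, A4⟩
    have hstep : ∀ R Q R' : X → X → Prop, AcyclicOrd R → OneStep R Q R' →
        d R Q = (Dtop R Q : ℝ) := by
      intro R Q R' hR h
      obtain ⟨hQ, ⟨a, b, h1, h2, h3, rfl⟩ | ⟨a, b, h1, h2, h3, rfl⟩⟩ := h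
      · rw [A3.2 R a b hR h1, A2 a b (asymPart_ne h1), Dtop_ominus h1]
        push_cast
        ring
      · have hab := asymPart_ne h3
        rw [A3.1 R a b hR hab h1 h2 hQ, A2 a b hab, Dtop_oplus hab h1 h2]
        push_cast
        ring
    have main : ∀ (n : ℕ) (R R' : X → X → Prop), diffNum R R' < n → AcyclicOrd R →
        AcyclicOrd R' → d R R' = (Dtop R R' : ℝ) := by
      intro n
      induction n with
      | zero => intro R R' h; exact absurd h (Nat.not_lt_zero _)
      | succ n ih =>
        intro R R' hn hR hR'
        by_cases he : ∀ x y, asymPart R x y ↔ asymPart R' x y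
        · rw [A4 R R' hR hR' he, Dtop_zero he]
          simp
        · obtain ⟨Q, hQ⟩ := exists_oneStep hR hR' he
          have hlt := diffNum_oneStep hQ
          rw [A1 R Q R' hR hR' (inBetween_of_oneStep hQ), Dtop_btw (btw_oneStep hQ),
            hstep R Q R' hR hQ, ih Q R' (by omega) hQ.1 hR']
          push_cast
          ring
    intro R R' hR hR'
    exact main _ R R' (Nat.lt_succ_self _) hR hR'
  · intro h
    have hone : ∀ a b : X, a ≠ b → d (RabRel a b) (RabPlusRel a b) = 1 := by
      intro a b hab
      rw [h _ _ Rab_acyclic (RabPlus_acyclic hab),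
        Dtop_step hab (by simp [asymPart_Rab]) (asymPart_RabPlus hab), Nnum_Rab hab]
      simp
    refine ⟨?_, hone, ⟨?_, ?_⟩, ?_⟩
    · intro R Q R' hR hR' hb
      have hQ : AcyclicOrd Q := by
        obtain ⟨n, c, h0, hs, rfl⟩ := hb
        cases n with
        | zero => exact h0.1
        | succ n => exact (hs (Fin.last n)).1
      rw [h _ _ hR hR', h _ _ hR hQ, h _ _ hQ hR', Dtop_btw (btw_inBetween hb)]
      push_cast
      ring
    · intro R a b hR hab h1 h2 hQ
      rw [h _ _ hR hQ, hone a b hab, Dtop_oplus hab h1 h2]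
      push_cast
      ring
    · intro R a b hR h1
      rw [h _ _ hR (ominus_acyclic hR h1), hone a b (asymPart_ne h1), Dtop_ominus h1]
      push_cast
      ring
    · intro R R' hR hR' he
      rw [h _ _ hR hR', Dtop_zero he]
      simp
end
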